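/- arXiv:1404.7593 — 4 statements merged into one kernel-verified Lean document; each statement's English description precedes it below -/
import Mathlib

section
/- Dual transform of a quadratic bivariate function in its second argument (the relation Λ = Π⁻¹(Q) and the formula for Λ₁): Let M be a symmetric n×n real matrix and let Q be a symmetric 2n×2n real matrix with n×n blocks Q¹¹, Q¹², Q²¹ = (Q¹²)ᵀ, Q²² such that Q²² − M is positive definite. Define Ŝ(x,z) = (1/2)[x;z]ᵀQ[x;z]. Then for all x, y ∈ ℝⁿ, −sup_{z∈ℝⁿ} { (1/2)(z−y)ᵀM(z−y) − Ŝ(x,z) } = (1/2)[x;y]ᵀΛ[x;y], where Λ is the symmetric 2n×2n matrix with blocks Λ¹¹ = Q¹¹ + Q¹²(M−Q²²)⁻¹Q²¹, Λ¹² = Q¹²(M−Q²²)⁻¹M, Λ²¹ = M(M−Q²²)⁻¹Q²¹, Λ²² = M(M−Q²²)⁻¹M − M. -/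
open Matrix

/-!
Stack `v = [x;y]`. The expression under the supremum is `-½ [v;z]ᵀ K [v;z]`, where `K` has blocks
`K¹¹ = diag(Q¹¹, -M)`, `K¹² = [Q¹²; M]` and `K²² = Q²² - M`. As `K²²` is positive definite,
completing the square in `z` shows that the minimum over `z` of the quadratic form of `K` is the
quadratic form of its Schur complement `K¹¹ - K¹² (K²²)⁻¹ K²¹`, and this matrix is `Λ`.
-/

section Ring

variable {m n R : Type*} [Fintype n] [CommRing R]

theorem dotProduct_mulVec_sub_sumElim_dotProduct_fromBlocks_mulVec [Fintype m] (Q₁₁ : Matrix m m R)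
    (Q₁₂ : Matrix m n R) (Q₂₂ : Matrix n n R) {M : Matrix n n R} (hM : M.IsSymm)
    (x : m → R) (y z : n → R) :
    (z - y) ⬝ᵥ M *ᵥ (z - y) - Sum.elim x z ⬝ᵥ fromBlocks Q₁₁ Q₁₂ Q₁₂ᵀ Q₂₂ *ᵥ Sum.elim x z =
      -(Sum.elim (Sum.elim x y) z ⬝ᵥ
        fromBlocks (fromBlocks Q₁₁ 0 0 (-M)) (fromRows Q₁₂ M) (fromRows Q₁₂ M)ᵀ (Q₂₂ - M) *ᵥ
          Sum.elim (Sum.elim x y) z) := by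
  have M_comm : z ⬝ᵥ M *ᵥ y = y ⬝ᵥ M *ᵥ z := by
    rw [← dotProduct_transpose_mulVec, hM.eq]
  simp only [transpose_fromRows, hM.eq, fromBlocks_mulVec, Sum.elim_comp_inl, Sum.elim_comp_inr,
    fromRows_mulVec, fromCols_mulVec_sumElim, sumElim_dotProduct_sumElim, dotProduct_add,
    dotProduct_sub, sub_dotProduct, mulVec_sub, sub_mulVec, neg_mulVec, dotProduct_neg,
    zero_mulVec, dotProduct_zero, M_comm]
  ring

variable [DecidableEq n]

theorem matrix_inv_neg (A : Matrix n n R) : (-A)⁻¹ = -A⁻¹ := by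
  by_cases hA : IsUnit A.det
  · exact inv_eq_right_inv (by rw [neg_mul_neg, mul_nonsing_inv A hA])
  · have hnegA : ¬IsUnit (-A).det := by
      rwa [← isUnit_iff_isUnit_det, IsUnit.neg_iff, isUnit_iff_isUnit_det]
    rw [nonsing_inv_apply_not_isUnit _ hA, nonsing_inv_apply_not_isUnit _ hnegA, neg_zero]

theorem fromBlocks_sub_fromRows_mul_inv_mul_transpose (Q₁₁ : Matrix m m R) (Q₁₂ : Matrix m n R)
    (Q₂₂ : Matrix n n R) {M : Matrix n n R} (hM : M.IsSymm) :
    fromBlocks Q₁₁ 0 0 (-M) - fromRows Q₁₂ M * (Q₂₂ - M)⁻¹ * (fromRows Q₁₂ M)ᵀ =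
      fromBlocks
        (Q₁₁ + Q₁₂ * (M - Q₂₂)⁻¹ * Q₁₂ᵀ)
        (Q₁₂ * (M - Q₂₂)⁻¹ * M)
        (M * (M - Q₂₂)⁻¹ * Q₁₂ᵀ)
        (M * (M - Q₂₂)⁻¹ * M - M) := by
  rw [← neg_sub M Q₂₂, matrix_inv_neg, Matrix.mul_neg, Matrix.neg_mul, sub_neg_eq_add,
    transpose_fromRows, hM.eq, fromRows_mul, fromRows_mul_fromCols, fromBlocks_add, zero_add,
    zero_add, neg_add_eq_sub]

end Ring

theorem isLeast_range_dotProduct_fromBlocks_mulVec {m n R : Type*} [Fintype m] [Fintype n]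
    [DecidableEq n] [CommRing R] [PartialOrder R] [IsOrderedAddMonoid R] [StarRing R]
    (A : Matrix m m R) (B : Matrix m n R) {D : Matrix n n R} [Invertible D] (hD : D.PosSemidef)
    (v : m → R) :
    IsLeast
      (Set.range fun z : n → R ↦
        star (Sum.elim v z) ⬝ᵥ fromBlocks A B Bᴴ D *ᵥ Sum.elim v z)
      (star v ⬝ᵥ (A - B * D⁻¹ * Bᴴ) *ᵥ v) := by
  have complete_square (z : n → R) :
      star (Sum.elim v z) ⬝ᵥ fromBlocks A B Bᴴ D *ᵥ Sum.elim v z =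
        star ((D⁻¹ * Bᴴ) *ᵥ v + z) ⬝ᵥ D *ᵥ ((D⁻¹ * Bᴴ) *ᵥ v + z) +
          star v ⬝ᵥ (A - B * D⁻¹ * Bᴴ) *ᵥ v := by
    simpa only [dotProduct_mulVec] using schur_complement_eq₂₂ A B v z hD.isHermitian
  simp only [complete_square]
  refine ⟨⟨-((D⁻¹ * Bᴴ) *ᵥ v), by simp⟩, ?_⟩
  rintro _ ⟨z, rfl⟩
  exact le_add_of_nonneg_left (hD.dotProduct_mulVec_nonneg _)

theorem dual_transform_second_argument_general {m n K : Type*} [Fintype m] [Fintype n]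
    [DecidableEq n] [Field K] [LinearOrder K] [IsStrictOrderedRing K] [StarRing K] [TrivialStar K]
    (Q₁₁ : Matrix m m K) (Q₁₂ : Matrix m n K) {M Q₂₂ : Matrix n n K}
    (hM : M.IsSymm) (hQ₂₂M : (Q₂₂ - M).PosDef) (x : m → K) (y : n → K) :
    IsGreatest
      (Set.range fun z : n → K ↦
        (1 / 2) * ((z - y) ⬝ᵥ M *ᵥ (z - y)) -
          (1 / 2) * (Sum.elim x z ⬝ᵥ fromBlocks Q₁₁ Q₁₂ Q₁₂ᵀ Q₂₂ *ᵥ Sum.elim x z))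
      (-((1 / 2) * (Sum.elim x y ⬝ᵥ
        fromBlocks
          (Q₁₁ + Q₁₂ * (M - Q₂₂)⁻¹ * Q₁₂ᵀ)
          (Q₁₂ * (M - Q₂₂)⁻¹ * M)
          (M * (M - Q₂₂)⁻¹ * Q₁₂ᵀ)
          (M * (M - Q₂₂)⁻¹ * M - M) *ᵥ Sum.elim x y))) := by
  have := hQ₂₂M.isUnit.invertible
  have schur_isLeast := isLeast_range_dotProduct_fromBlocks_mulVec (fromBlocks Q₁₁ 0 0 (-M))
    (fromRows Q₁₂ M) hQ₂₂M.posSemidef (Sum.elim x y)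
  simp only [star_trivial, conjTranspose_eq_transpose_of_trivial,
    fromBlocks_sub_fromRows_mul_inv_mul_transpose Q₁₁ Q₁₂ Q₂₂ hM] at schur_isLeast
  have neg_half_antitone : Antitone fun t : K ↦ -((1 / 2) * t) :=
    fun s t hst ↦ neg_le_neg (mul_le_mul_of_nonneg_left hst one_half_pos.le)
  simpa only [← mul_sub, dotProduct_mulVec_sub_sumElim_dotProduct_fromBlocks_mulVec _ _ _ hM,
    mul_neg, ← Set.range_comp, Function.comp_def] using neg_half_antitone.map_isLeast schur_isLeast

/-- Dual transform of a quadratic bivariate function in its second argument: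
for `Q²² − M` positive definite, `−sup_z {½(z−y)ᵀM(z−y) − ½[x;z]ᵀQ[x;z]} = ½[x;y]ᵀΛ[x;y]`
with `Λ¹¹ = Q¹¹ + Q¹²(M−Q²²)⁻¹Q²¹`, `Λ¹² = Q¹²(M−Q²²)⁻¹M`, `Λ²¹ = M(M−Q²²)⁻¹Q²¹`,
`Λ²² = M(M−Q²²)⁻¹M − M`. -/
theorem dual_transform_second_argument {n : ℕ}
    (M Q11 Q12 Q22 : Matrix (Fin n) (Fin n) ℝ)
    (hMsymm : M.IsSymm) (hQ11 : Q11.IsSymm) (hQ22 : Q22.IsSymm)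
    (hQ22M : (Q22 - M).PosDef)
    (x y : Fin n → ℝ) :
    -(⨆ z : Fin n → ℝ,
        (1 / 2) * ((z - y) ⬝ᵥ M *ᵥ (z - y)) -
          (1 / 2) * (Sum.elim x z ⬝ᵥ fromBlocks Q11 Q12 Q12ᵀ Q22 *ᵥ Sum.elim x z)) =
      (1 / 2) * (Sum.elim x y ⬝ᵥ
        fromBlocks
          (Q11 + Q12 * (M - Q22)⁻¹ * Q12ᵀ)
          (Q12 * (M - Q22)⁻¹ * M)
          (M * (M - Q22)⁻¹ * Q12ᵀ)
          (M * (M - Q22)⁻¹ * M - M) *ᵥ Sum.elim x y) := by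
  rw [(dual_transform_second_argument_general Q11 Q12 hMsymm hQ22M x y).isLUB.ciSup_eq, neg_neg]
end

section
/- Dual transform of a quadratic bivariate function in its first argument (the relation Θ = Γ⁻¹(Q) and the formula for Θ₁): Let M be a symmetric n×n real matrix and let Q be a symmetric 2n×2n real matrix with n×n blocks Q¹¹, Q¹², Q²¹ = (Q¹²)ᵀ, Q²² such that Q¹¹ − M is positive definite. Define Ŝ(x,z) = (1/2)[x;z]ᵀQ[x;z]. Then for all y, z ∈ ℝⁿ, −sup_{x∈ℝⁿ} { (1/2)(x−y)ᵀM(x−y) − Ŝ(x,z) } = (1/2)[y;z]ᵀΘ[y;z], where Θ is the symmetric 2n×2n matrix with blocks Θ¹¹ = M(M−Q¹¹)⁻¹M − M, Θ¹² = M(M−Q¹¹)⁻¹Q¹², Θ²¹ = Q²¹(M−Q¹¹)⁻¹M, Θ²² = Q²¹(M−Q¹¹)⁻¹Q¹² + Q²². -/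
open Matrix

/-!
Up to the factor `-1/2`, the objective is a quadratic form in `[x; y; z]` whose `x`-block `Q¹¹ - M`
is positive definite. Completing the square in `x` shows that such a form attains its minimum over
`x`, and that the minimum is the quadratic form in `[y; z]` given by the Schur complement of the
`x`-block. That Schur complement is `Θ`.
-/

section SchurComplement

variable {m k R : Type*} [Fintype m] [DecidableEq m] [Fintype k]
  [CommRing R] [PartialOrder R] [IsOrderedAddMonoid R] [StarRing R]

theorem isLeast_range_fromBlocks_dotProduct_mulVec {A : Matrix m m R} [Invertible A]
    (hA : A.PosSemidef) (B : Matrix m k R) (D : Matrix k k R) (w : k → R) :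
    IsLeast
      (Set.range fun x : m → R ↦ star (Sum.elim x w) ⬝ᵥ fromBlocks A B Bᴴ D *ᵥ Sum.elim x w)
      (star w ⬝ᵥ (D - Bᴴ * A⁻¹ * B) *ᵥ w) := by
  have complete_square (x : m → R) :
      star (Sum.elim x w) ⬝ᵥ fromBlocks A B Bᴴ D *ᵥ Sum.elim x w =
        star (x + (A⁻¹ * B) *ᵥ w) ⬝ᵥ A *ᵥ (x + (A⁻¹ * B) *ᵥ w) +
          star w ⬝ᵥ (D - Bᴴ * A⁻¹ * B) *ᵥ w := by
    simpa only [← dotProduct_mulVec] using schur_complement_eq₁₁ B D x w hA.isHermitian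
  refine ⟨⟨-((A⁻¹ * B) *ᵥ w), ?_⟩, ?_⟩
  · simp [complete_square]
  · rintro _ ⟨x, rfl⟩
    simpa only [complete_square] using le_add_of_nonneg_left (hA.dotProduct_mulVec_nonneg _)

end SchurComplement

section Blocks

variable {m k R : Type*} [Fintype m] [CommRing R]

theorem nonsing_inv_neg [DecidableEq m] (A : Matrix m m R) : (-A)⁻¹ = -A⁻¹ := by
  by_cases hA : IsUnit A
  · refine inv_eq_right_inv ?_
    rw [neg_mul_neg, mul_nonsing_inv A ((isUnit_iff_isUnit_det A).mp hA)]
  · rw [nonsing_inv_eq_ringInverse, nonsing_inv_eq_ringInverse, Ring.inverse_non_unit _ hA,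
      Ring.inverse_non_unit _ (by rwa [IsUnit.neg_iff]), neg_zero]

theorem sub_dotProduct_mulVec_sub_sub_fromBlocks [Fintype k] {M : Matrix m m R} (hM : M.IsSymm)
    (Q₁₁ : Matrix m m R) (Q₁₂ : Matrix m k R) (Q₂₂ : Matrix k k R) (x y : m → R) (z : k → R) :
    (x - y) ⬝ᵥ M *ᵥ (x - y) - Sum.elim x z ⬝ᵥ fromBlocks Q₁₁ Q₁₂ Q₁₂ᵀ Q₂₂ *ᵥ Sum.elim x z =
      -(Sum.elim x (Sum.elim y z) ⬝ᵥ
        fromBlocks (Q₁₁ - M) (fromCols M Q₁₂) (fromCols M Q₁₂)ᵀ (fromBlocks (-M) 0 0 Q₂₂) *ᵥ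
          Sum.elim x (Sum.elim y z)) := by
  simp only [fromBlocks_mulVec, transpose_fromCols, fromRows_mulVec, fromCols_mulVec,
    sumElim_dotProduct_sumElim, Sum.elim_comp_inl, Sum.elim_comp_inr, hM.eq, sub_mulVec,
    mulVec_sub, neg_mulVec, zero_mulVec, dotProduct_add, dotProduct_sub, sub_dotProduct,
    dotProduct_neg, dotProduct_zero]
  ring

theorem fromBlocks_sub_fromCols_transpose_mul_inv_mul_fromCols [DecidableEq m] {M : Matrix m m R}
    (hM : M.IsSymm) (Q₁₁ : Matrix m m R) (Q₁₂ : Matrix m k R) (Q₂₂ : Matrix k k R) :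
    fromBlocks (-M) 0 0 Q₂₂ - (fromCols M Q₁₂)ᵀ * (Q₁₁ - M)⁻¹ * fromCols M Q₁₂ =
      fromBlocks
        (M * (M - Q₁₁)⁻¹ * M - M)
        (M * (M - Q₁₁)⁻¹ * Q₁₂)
        (Q₁₂ᵀ * (M - Q₁₁)⁻¹ * M)
        (Q₁₂ᵀ * (M - Q₁₁)⁻¹ * Q₁₂ + Q₂₂) := by
  rw [← neg_sub M Q₁₁, nonsing_inv_neg, transpose_fromCols, hM.eq, fromRows_mul,
    fromRows_mul_fromCols, sub_eq_add_neg, fromBlocks_neg, fromBlocks_add]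
  simp only [Matrix.mul_neg, Matrix.neg_mul, neg_neg, zero_add]
  rw [neg_add_eq_sub, add_comm Q₂₂]

end Blocks

theorem dual_transform_first_argument_general {m k K : Type*} [Fintype m] [DecidableEq m]
    [Fintype k] [Field K] [LinearOrder K] [IsStrictOrderedRing K] [StarRing K] [TrivialStar K]
    {M Q₁₁ : Matrix m m K} (hM : M.IsSymm) (hQ₁₁M : (Q₁₁ - M).PosDef)
    (Q₁₂ : Matrix m k K) (Q₂₂ : Matrix k k K) (y : m → K) (z : k → K) :
    IsGreatest
      (Set.range fun x : m → K ↦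
        (1 / 2) * ((x - y) ⬝ᵥ M *ᵥ (x - y)) -
          (1 / 2) * (Sum.elim x z ⬝ᵥ fromBlocks Q₁₁ Q₁₂ Q₁₂ᵀ Q₂₂ *ᵥ Sum.elim x z))
      (-((1 / 2) * (Sum.elim y z ⬝ᵥ
        fromBlocks
          (M * (M - Q₁₁)⁻¹ * M - M)
          (M * (M - Q₁₁)⁻¹ * Q₁₂)
          (Q₁₂ᵀ * (M - Q₁₁)⁻¹ * M)
          (Q₁₂ᵀ * (M - Q₁₁)⁻¹ * Q₁₂ + Q₂₂) *ᵥ Sum.elim y z))) := by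
  have := hQ₁₁M.isUnit.invertible
  have schur_isLeast := isLeast_range_fromBlocks_dotProduct_mulVec hQ₁₁M.posSemidef
    (fromCols M Q₁₂) (fromBlocks (-M) 0 0 Q₂₂) (Sum.elim y z)
  have antitone_neg_half : Antitone fun t : K ↦ -((1 / 2) * t) :=
    fun s t hst ↦ neg_le_neg (mul_le_mul_of_nonneg_left hst (by positivity))
  simp only [star_trivial, conjTranspose_eq_transpose_of_trivial,
    fromBlocks_sub_fromCols_transpose_mul_inv_mul_fromCols hM] at schur_isLeast
  simp only [← mul_sub, sub_dotProduct_mulVec_sub_sub_fromBlocks hM, mul_neg]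
  simpa only [← Set.range_comp, Function.comp_def] using
    antitone_neg_half.map_isLeast schur_isLeast

/-- Dual transform of a quadratic bivariate function in its first argument:
for `Q¹¹ − M` positive definite, `−sup_x {½(x−y)ᵀM(x−y) − ½[x;z]ᵀQ[x;z]} = ½[y;z]ᵀΘ[y;z]`
with `Θ¹¹ = M(M−Q¹¹)⁻¹M − M`, `Θ¹² = M(M−Q¹¹)⁻¹Q¹²`, `Θ²¹ = Q²¹(M−Q¹¹)⁻¹M`,
`Θ²² = Q²¹(M−Q¹¹)⁻¹Q¹² + Q²²`. -/
theorem dual_transform_first_argument {n : ℕ}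
    (M Q11 Q12 Q22 : Matrix (Fin n) (Fin n) ℝ)
    (hMsymm : M.IsSymm) (hQ11 : Q11.IsSymm) (hQ22 : Q22.IsSymm)
    (hQ11M : (Q11 - M).PosDef)
    (y z : Fin n → ℝ) :
    -(⨆ x : Fin n → ℝ,
        (1 / 2) * ((x - y) ⬝ᵥ M *ᵥ (x - y)) -
          (1 / 2) * (Sum.elim x z ⬝ᵥ fromBlocks Q11 Q12 Q12ᵀ Q22 *ᵥ Sum.elim x z)) =
      (1 / 2) * (Sum.elim y z ⬝ᵥ
        fromBlocks
          (M * (M - Q11)⁻¹ * M - M)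
          (M * (M - Q11)⁻¹ * Q12)
          (Q12ᵀ * (M - Q11)⁻¹ * M)
          (Q12ᵀ * (M - Q11)⁻¹ * Q12 + Q22) *ᵥ Sum.elim y z) :=
  neg_eq_iff_eq_neg.mpr
    (dual_transform_first_argument_general hMsymm hQ11M Q12 Q22 y z).csSup_eq
end

section
/- Monotonicity and lower bound for the (2,2) block of the auxiliary Hessian sequence: Let M be a symmetric n×n real matrix satisfying: γ²·I − Bᵀ(R_k(M))B is positive definite for all k ≥ 0 and MB(γ²·I − BᵀMB)⁻¹BᵀM is positive definite. Define matrix sequences by Q_0¹¹ = M, Q_0¹² = −M, Q_0²¹ = −M, Q_0²² = M, and for k ≥ 0: Q_{k+1}¹¹ = R(Q_k¹¹), Q_{k+1}¹² = AᵀQ_k¹² + AᵀQ_k¹¹B(γ²·I − BᵀQ_k¹¹B)⁻¹BᵀQ_k¹², Q_{k+1}²¹ = (Q_{k+1}¹²)ᵀ, Q_{k+1}²² = Q_k²² + Q_k²¹B(γ²·I − BᵀQ_k¹¹B)⁻¹BᵀQ_k¹². Then Q_k¹¹ = R_k(M) for all k, Q_{k+1}²² ≥ Q_k²² in the Loewner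 order for all k ≥ 0, and Q_k²² − M is positive definite for all k ≥ 1. -/
open Matrix

/-- The Riccati operator `R(P) = Φ + AᵀPA + AᵀPB(γ²I − BᵀPB)⁻¹BᵀPA`. -/
noncomputable def Ric {n m : ℕ} (A : Matrix (Fin n) (Fin n) ℝ) (B : Matrix (Fin n) (Fin m) ℝ)
    (Φ : Matrix (Fin n) (Fin n) ℝ) (γ : ℝ) (P : Matrix (Fin n) (Fin n) ℝ) :
    Matrix (Fin n) (Fin n) ℝ :=
  Φ + Aᵀ * P * A +
    Aᵀ * P * B * (γ ^ 2 • (1 : Matrix (Fin m) (Fin m) ℝ) - Bᵀ * P * B)⁻¹ * Bᵀ * P * A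

/-!
Each step of the recursion adds `Q²¹ B (γ²I − BᵀQ¹¹B)⁻¹ Bᵀ Q¹²` to `Q²²`. Since `Q²¹ = (Q¹²)ᵀ`, this
is a congruence of the inverse of a positive definite matrix, hence positive semidefinite. The very
first increment is `M B (γ²I − BᵀMB)⁻¹ Bᵀ M`, which is positive definite by assumption, and adding
positive semidefinite increments to it keeps it so.
-/

theorem eq_iterate_of_succ_eq {α : Type*} {f : α → α} {u : ℕ → α}
    (hu : ∀ k, u (k + 1) = f (u k)) (k : ℕ) : u k = f^[k] (u 0) := by
  induction k with
  | zero => rfl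
  | succ k ih => rw [hu, ih, Function.iterate_succ_apply']

theorem posSemidef_conjTranspose_mul_mul_inv_mul_mul {ι κ l R : Type*} [Fintype ι] [Fintype κ]
    [DecidableEq κ] [Finite l] [CommRing R] [PartialOrder R] [StarRing R]
    {S : Matrix κ κ R} (hS : S.PosSemidef) (B : Matrix ι κ R) (X : Matrix ι l R) :
    (Xᴴ * B * S⁻¹ * Bᴴ * X).PosSemidef := by
  simpa only [conjTranspose_mul, conjTranspose_conjTranspose, Matrix.mul_assoc]
    using hS.inv.conjTranspose_mul_mul_same (Bᴴ * X)

theorem posDef_sub_zero_of_posSemidef_succ_sub {ι R : Type*} [Ring R] [PartialOrder R]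
    [StarRing R] [AddLeftMono R] {X : ℕ → Matrix ι ι R}
    (hfirst : (X 1 - X 0).PosDef) (hstep : ∀ k, (X (k + 1) - X k).PosSemidef)
    {k : ℕ} (hk : 1 ≤ k) : (X k - X 0).PosDef := by
  induction k, hk using Nat.le_induction with
  | base => exact hfirst
  | succ k _ ih =>
    rw [← sub_add_sub_cancel' (X k) (X 0) (X (k + 1))]
    exact ih.add_posSemidef (hstep k)

/-- The four blocks of the auxiliary Hessian sequence `Q_k` attached to the Riccati operator
`Ric A B Φ γ` and the initial matrix `M`. The blocks are unrestricted sequences constrained by the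
recursion, and `Q²¹` is tied to `Q¹²` by transposition only from index `1` on. -/
structure IsAuxiliaryHessianSeq {n m : ℕ} (A : Matrix (Fin n) (Fin n) ℝ)
    (B : Matrix (Fin n) (Fin m) ℝ) (Φ : Matrix (Fin n) (Fin n) ℝ) (γ : ℝ)
    (M : Matrix (Fin n) (Fin n) ℝ) (Q11 Q12 Q21 Q22 : ℕ → Matrix (Fin n) (Fin n) ℝ) : Prop where
  block11_zero : Q11 0 = M
  block12_zero : Q12 0 = -M
  block21_zero : Q21 0 = -M
  block22_zero : Q22 0 = M
  block11_succ (k : ℕ) : Q11 (k + 1) = Ric A B Φ γ (Q11 k)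
  block12_succ (k : ℕ) : Q12 (k + 1) =
    Aᵀ * Q12 k +
      Aᵀ * Q11 k * B *
        (γ ^ 2 • (1 : Matrix (Fin m) (Fin m) ℝ) - Bᵀ * Q11 k * B)⁻¹ * Bᵀ * Q12 k
  block21_succ (k : ℕ) : Q21 (k + 1) = (Q12 (k + 1))ᵀ
  block22_succ (k : ℕ) : Q22 (k + 1) =
    Q22 k +
      Q21 k * B *
        (γ ^ 2 • (1 : Matrix (Fin m) (Fin m) ℝ) - Bᵀ * Q11 k * B)⁻¹ * Bᵀ * Q12 k

namespace IsAuxiliaryHessianSeq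

variable {n m : ℕ} {A : Matrix (Fin n) (Fin n) ℝ} {B : Matrix (Fin n) (Fin m) ℝ}
  {Φ : Matrix (Fin n) (Fin n) ℝ} {γ : ℝ} {M : Matrix (Fin n) (Fin n) ℝ}
  {Q11 Q12 Q21 Q22 : ℕ → Matrix (Fin n) (Fin n) ℝ}

theorem block11_eq_iterate (hQ : IsAuxiliaryHessianSeq A B Φ γ M Q11 Q12 Q21 Q22) (k : ℕ) :
    Q11 k = (Ric A B Φ γ)^[k] M :=
  hQ.block11_zero ▸ eq_iterate_of_succ_eq hQ.block11_succ k

theorem block21_eq_transpose (hQ : IsAuxiliaryHessianSeq A B Φ γ M Q11 Q12 Q21 Q22)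
    (hM : M.IsSymm) : ∀ k, Q21 k = (Q12 k)ᵀ
  | 0 => by rw [hQ.block21_zero, hQ.block12_zero, transpose_neg, hM.eq]
  | k + 1 => hQ.block21_succ k

theorem posSemidef_block22_succ_sub (hQ : IsAuxiliaryHessianSeq A B Φ γ M Q11 Q12 Q21 Q22)
    (hM : M.IsSymm) {k : ℕ}
    (hS : (γ ^ 2 • (1 : Matrix (Fin m) (Fin m) ℝ) - Bᵀ * Q11 k * B).PosDef) :
    (Q22 (k + 1) - Q22 k).PosSemidef := by
  rw [hQ.block22_succ, add_sub_cancel_left, hQ.block21_eq_transpose hM]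
  simpa only [conjTranspose_eq_transpose_of_trivial]
    using posSemidef_conjTranspose_mul_mul_inv_mul_mul hS.posSemidef B (Q12 k)

theorem block22_one_sub_zero (hQ : IsAuxiliaryHessianSeq A B Φ γ M Q11 Q12 Q21 Q22) :
    Q22 1 - Q22 0 =
      M * B * (γ ^ 2 • (1 : Matrix (Fin m) (Fin m) ℝ) - Bᵀ * M * B)⁻¹ * Bᵀ * M := by
  rw [hQ.block22_succ 0, add_sub_cancel_left, hQ.block11_zero, hQ.block12_zero, hQ.block21_zero]
  simp only [Matrix.neg_mul, Matrix.mul_neg, neg_neg]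

end IsAuxiliaryHessianSeq

theorem auxiliary_hessian_block22_general {n m : ℕ}
    {A : Matrix (Fin n) (Fin n) ℝ} {B : Matrix (Fin n) (Fin m) ℝ}
    {Φ : Matrix (Fin n) (Fin n) ℝ} {γ : ℝ} {M : Matrix (Fin n) (Fin n) ℝ}
    {Q11 Q12 Q21 Q22 : ℕ → Matrix (Fin n) (Fin n) ℝ}
    (hQ : IsAuxiliaryHessianSeq A B Φ γ M Q11 Q12 Q21 Q22) (hM : M.IsSymm)
    (hS : ∀ k : ℕ,
      (γ ^ 2 • (1 : Matrix (Fin m) (Fin m) ℝ) - Bᵀ * ((Ric A B Φ γ)^[k] M) * B).PosDef)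
    (hfirst :
      (M * B * (γ ^ 2 • (1 : Matrix (Fin m) (Fin m) ℝ) - Bᵀ * M * B)⁻¹ * Bᵀ * M).PosDef) :
    (∀ k : ℕ, Q11 k = (Ric A B Φ γ)^[k] M) ∧
      (∀ k : ℕ, (Q22 (k + 1) - Q22 k).PosSemidef) ∧
      (∀ k : ℕ, 1 ≤ k → (Q22 k - M).PosDef) := by
  have hstep (k : ℕ) : (Q22 (k + 1) - Q22 k).PosSemidef :=
    hQ.posSemidef_block22_succ_sub hM (hQ.block11_eq_iterate k ▸ hS k)
  refine ⟨hQ.block11_eq_iterate, hstep, fun k hk => ?_⟩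
  rw [← hQ.block22_zero]
  exact posDef_sub_zero_of_posSemidef_succ_sub (hQ.block22_one_sub_zero ▸ hfirst) hstep hk

/-- Monotonicity and lower bound for the `(2,2)` block of the auxiliary Hessian
sequence `Q_k`. -/
theorem auxiliary_hessian_block22 {n m : ℕ}
    (A : Matrix (Fin n) (Fin n) ℝ) (B : Matrix (Fin n) (Fin m) ℝ)
    (Φ : Matrix (Fin n) (Fin n) ℝ) (hΦsymm : Φ.IsSymm) (hΦ : Φ.PosDef)
    (γ : ℝ) (hγ : 0 < γ)
    (M : Matrix (Fin n) (Fin n) ℝ) (hMsymm : M.IsSymm)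
    (hM1 : ∀ k : ℕ,
      (γ ^ 2 • (1 : Matrix (Fin m) (Fin m) ℝ) - Bᵀ * ((Ric A B Φ γ)^[k] M) * B).PosDef)
    (hM3 : (M * B * (γ ^ 2 • (1 : Matrix (Fin m) (Fin m) ℝ) - Bᵀ * M * B)⁻¹ * Bᵀ * M).PosDef)
    (Q11 Q12 Q21 Q22 : ℕ → Matrix (Fin n) (Fin n) ℝ)
    (hQ110 : Q11 0 = M) (hQ120 : Q12 0 = -M) (hQ210 : Q21 0 = -M) (hQ220 : Q22 0 = M)
    (hrec11 : ∀ k : ℕ, Q11 (k + 1) = Ric A B Φ γ (Q11 k))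
    (hrec12 : ∀ k : ℕ, Q12 (k + 1) =
      Aᵀ * Q12 k +
        Aᵀ * Q11 k * B *
          (γ ^ 2 • (1 : Matrix (Fin m) (Fin m) ℝ) - Bᵀ * Q11 k * B)⁻¹ * Bᵀ * Q12 k)
    (hrec21 : ∀ k : ℕ, Q21 (k + 1) = (Q12 (k + 1))ᵀ)
    (hrec22 : ∀ k : ℕ, Q22 (k + 1) =
      Q22 k +
        Q21 k * B *
          (γ ^ 2 • (1 : Matrix (Fin m) (Fin m) ℝ) - Bᵀ * Q11 k * B)⁻¹ * Bᵀ * Q12 k) :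
    (∀ k : ℕ, Q11 k = (Ric A B Φ γ)^[k] M) ∧
      (∀ k : ℕ, (Q22 (k + 1) - Q22 k).PosSemidef) ∧
      (∀ k : ℕ, 1 ≤ k → (Q22 k - M).PosDef) :=
  auxiliary_hessian_block22_general
    ⟨hQ110, hQ120, hQ210, hQ220, hrec11, hrec12, hrec21, hrec22⟩ hMsymm hM1 hM3
end

section
/- Γ⁻¹ inverts Γ: Let M be a symmetric invertible n×n real matrix and let Ω be a symmetric 2n×2n real matrix with n×n blocks Ω¹¹, Ω¹², Ω²¹ = (Ω¹²)ᵀ, Ω²² such that M + Ω¹¹ is invertible. Then M − (Γ(Ω))¹¹ = M(M+Ω¹¹)⁻¹M is invertible and Γ⁻¹(Γ(Ω)) = Ω, where Γ⁻¹ is given blockwise for a matrix Ψ with M − Ψ¹¹ invertible by (Γ⁻¹(Ψ))¹¹ = M(M−Ψ¹¹)⁻¹M − M, (Γ⁻¹(Ψ))¹² = M(M−Ψ¹¹)⁻¹Ψ¹², (Γ⁻¹(Ψ))²¹ = Ψ²¹(M−Ψ¹¹)⁻¹M, (Γ⁻¹(Ψ))²² = Ψ²¹(M−Ψ¹¹)⁻¹Ψ¹²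 + Ψ²². -/
open Matrix

/-- The operation `Γ` on symmetric `2n×2n` matrices `Ω` (with `M + Ω¹¹` invertible):
blocks `M − M(M+Ω¹¹)⁻¹M`, `M(M+Ω¹¹)⁻¹Ω¹²`, `Ω²¹(M+Ω¹¹)⁻¹M`, `Ω²² − Ω²¹(M+Ω¹¹)⁻¹Ω¹²`. -/
noncomputable def GamOp {n : ℕ} (M : Matrix (Fin n) (Fin n) ℝ)
    (Ω : Matrix (Fin n ⊕ Fin n) (Fin n ⊕ Fin n) ℝ) :
    Matrix (Fin n ⊕ Fin n) (Fin n ⊕ Fin n) ℝ :=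
  fromBlocks
    (M - M * (M + Ω.toBlocks₁₁)⁻¹ * M)
    (M * (M + Ω.toBlocks₁₁)⁻¹ * Ω.toBlocks₁₂)
    (Ω.toBlocks₂₁ * (M + Ω.toBlocks₁₁)⁻¹ * M)
    (Ω.toBlocks₂₂ - Ω.toBlocks₂₁ * (M + Ω.toBlocks₁₁)⁻¹ * Ω.toBlocks₁₂)

/-- The operation `Γ⁻¹`, given blockwise for `Ψ` with `M − Ψ¹¹` invertible by
`M(M−Ψ¹¹)⁻¹M − M`, `M(M−Ψ¹¹)⁻¹Ψ¹²`, `Ψ²¹(M−Ψ¹¹)⁻¹M`, `Ψ²¹(M−Ψ¹¹)⁻¹Ψ¹² + Ψ²²`. -/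
noncomputable def GamInvOp {n : ℕ} (M : Matrix (Fin n) (Fin n) ℝ)
    (Ψ : Matrix (Fin n ⊕ Fin n) (Fin n ⊕ Fin n) ℝ) :
    Matrix (Fin n ⊕ Fin n) (Fin n ⊕ Fin n) ℝ :=
  fromBlocks
    (M * (M - Ψ.toBlocks₁₁)⁻¹ * M - M)
    (M * (M - Ψ.toBlocks₁₁)⁻¹ * Ψ.toBlocks₁₂)
    (Ψ.toBlocks₂₁ * (M - Ψ.toBlocks₁₁)⁻¹ * M)
    (Ψ.toBlocks₂₁ * (M - Ψ.toBlocks₁₁)⁻¹ * Ψ.toBlocks₁₂ + Ψ.toBlocks₂₂)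

section

variable {m p q R : Type*} [Fintype m] [DecidableEq m] [CommRing R]

/-- The operation `Γ` over a commutative ring, for possibly rectangular `Ω` whose `(1,1)` block
is square; it is meaningful when `M + Ω¹¹` is invertible. -/
noncomputable def blockGamma (M : Matrix m m R) (Ω : Matrix (m ⊕ p) (m ⊕ q) R) :
    Matrix (m ⊕ p) (m ⊕ q) R :=
  fromBlocks
    (M - M * (M + Ω.toBlocks₁₁)⁻¹ * M)
    (M * (M + Ω.toBlocks₁₁)⁻¹ * Ω.toBlocks₁₂)
    (Ω.toBlocks₂₁ * (M + Ω.toBlocks₁₁)⁻¹ * M)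
    (Ω.toBlocks₂₂ - Ω.toBlocks₂₁ * (M + Ω.toBlocks₁₁)⁻¹ * Ω.toBlocks₁₂)

/-- The operation `Γ⁻¹` at the generality of `blockGamma`; it is meaningful when `M - Ψ¹¹` is
invertible. -/
noncomputable def blockGammaInv (M : Matrix m m R) (Ψ : Matrix (m ⊕ p) (m ⊕ q) R) :
    Matrix (m ⊕ p) (m ⊕ q) R :=
  fromBlocks
    (M * (M - Ψ.toBlocks₁₁)⁻¹ * M - M)
    (M * (M - Ψ.toBlocks₁₁)⁻¹ * Ψ.toBlocks₁₂)
    (Ψ.toBlocks₂₁ * (M - Ψ.toBlocks₁₁)⁻¹ * M)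
    (Ψ.toBlocks₂₁ * (M - Ψ.toBlocks₁₁)⁻¹ * Ψ.toBlocks₁₂ + Ψ.toBlocks₂₂)

variable {M P : Matrix m m R}

theorem isUnit_mul_inv_mul (hM : IsUnit M) (hP : IsUnit P) : IsUnit (M * P⁻¹ * M) :=
  (hM.mul (isUnit_nonsing_inv_iff.mpr hP)).mul hM

-- With `P = M + Ω¹¹`, this identity alone makes the formulas for `Γ⁻¹` undo those for `Γ`.
theorem mul_inv_mul_inv_mul_cancel (hM : IsUnit M) (hP : IsUnit P) :
    M * (M * P⁻¹ * M)⁻¹ * M = P := by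
  have hMdet : IsUnit M.det := (isUnit_iff_isUnit_det M).mp hM
  have hPdet : IsUnit P.det := (isUnit_iff_isUnit_det P).mp hP
  calc M * (M * P⁻¹ * M)⁻¹ * M
      = M * (M⁻¹ * (P * M⁻¹)) * M := by
        rw [Matrix.mul_inv_rev, Matrix.mul_inv_rev, nonsing_inv_nonsing_inv P hPdet]
    _ = P := by
        rw [mul_nonsing_inv_cancel_left M _ hMdet, nonsing_inv_mul_cancel_right M _ hMdet]

theorem mul_inv_mul_inv_mul_cancel_left (hM : IsUnit M) (hP : IsUnit P) (B : Matrix m q R) :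
    M * (M * P⁻¹ * M)⁻¹ * (M * P⁻¹ * B) = B := by
  calc M * (M * P⁻¹ * M)⁻¹ * (M * P⁻¹ * B)
      = M * (M * P⁻¹ * M)⁻¹ * M * (P⁻¹ * B) := by simp only [Matrix.mul_assoc]
    _ = P * (P⁻¹ * B) := by rw [mul_inv_mul_inv_mul_cancel hM hP]
    _ = B := mul_nonsing_inv_cancel_left P B ((isUnit_iff_isUnit_det P).mp hP)

theorem mul_inv_mul_inv_mul_cancel_right (hM : IsUnit M) (hP : IsUnit P) (C : Matrix p m R) :
    C * P⁻¹ * M * (M * P⁻¹ * M)⁻¹ * M = C := by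
  calc C * P⁻¹ * M * (M * P⁻¹ * M)⁻¹ * M
      = C * P⁻¹ * (M * (M * P⁻¹ * M)⁻¹ * M) := by simp only [Matrix.mul_assoc]
    _ = C * P⁻¹ * P := by rw [mul_inv_mul_inv_mul_cancel hM hP]
    _ = C := nonsing_inv_mul_cancel_right P C ((isUnit_iff_isUnit_det P).mp hP)

theorem sub_toBlocks₁₁_blockGamma (M : Matrix m m R) (Ω : Matrix (m ⊕ p) (m ⊕ q) R) :
    M - (blockGamma M Ω).toBlocks₁₁ = M * (M + Ω.toBlocks₁₁)⁻¹ * M := by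
  rw [blockGamma, toBlocks_fromBlocks₁₁, sub_sub_cancel]

theorem blockGammaInv_blockGamma (hM : IsUnit M) {Ω : Matrix (m ⊕ p) (m ⊕ q) R}
    (hΩ : IsUnit (M + Ω.toBlocks₁₁)) : blockGammaInv M (blockGamma M Ω) = Ω := by
  have block₂₂ : Ω.toBlocks₂₁ * (M + Ω.toBlocks₁₁)⁻¹ * M * (M * (M + Ω.toBlocks₁₁)⁻¹ * M)⁻¹ *
      (M * (M + Ω.toBlocks₁₁)⁻¹ * Ω.toBlocks₁₂) =
        Ω.toBlocks₂₁ * (M + Ω.toBlocks₁₁)⁻¹ * Ω.toBlocks₁₂ := by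
    rw [← Matrix.mul_assoc _ _ Ω.toBlocks₁₂, ← Matrix.mul_assoc _ M,
      mul_inv_mul_inv_mul_cancel_right hM hΩ]
  rw [blockGammaInv, sub_toBlocks₁₁_blockGamma]
  simp only [blockGamma, toBlocks_fromBlocks₁₂, toBlocks_fromBlocks₂₁, toBlocks_fromBlocks₂₂]
  rw [mul_inv_mul_inv_mul_cancel hM hΩ, mul_inv_mul_inv_mul_cancel_left hM hΩ,
    mul_inv_mul_inv_mul_cancel_right hM hΩ, block₂₂, add_sub_cancel_left, add_sub_cancel,
    fromBlocks_toBlocks]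

theorem gamma_inv_gamma_general (hM : IsUnit M) {Ω : Matrix (m ⊕ p) (m ⊕ q) R}
    (hΩ : IsUnit (M + Ω.toBlocks₁₁)) :
    M - (blockGamma M Ω).toBlocks₁₁ = M * (M + Ω.toBlocks₁₁)⁻¹ * M ∧
      IsUnit (M - (blockGamma M Ω).toBlocks₁₁) ∧
      blockGammaInv M (blockGamma M Ω) = Ω := by
  refine ⟨sub_toBlocks₁₁_blockGamma M Ω, ?_, blockGammaInv_blockGamma hM hΩ⟩
  rw [sub_toBlocks₁₁_blockGamma]
  exact isUnit_mul_inv_mul hM hΩ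

end

/-- `Γ⁻¹` inverts `Γ`: for `M` symmetric invertible and `M + Ω¹¹` invertible,
`M − (Γ(Ω))¹¹ = M(M+Ω¹¹)⁻¹M` is invertible and `Γ⁻¹(Γ(Ω)) = Ω`. -/
theorem gamma_inv_gamma {n : ℕ}
    (M : Matrix (Fin n) (Fin n) ℝ) (hMsymm : M.IsSymm) (hMinv : IsUnit M)
    (Ω : Matrix (Fin n ⊕ Fin n) (Fin n ⊕ Fin n) ℝ)
    (hΩsymm : Ω.IsSymm) (hΩ21 : Ω.toBlocks₂₁ = (Ω.toBlocks₁₂)ᵀ)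
    (hinv : IsUnit (M + Ω.toBlocks₁₁)) :
    M - (GamOp M Ω).toBlocks₁₁ = M * (M + Ω.toBlocks₁₁)⁻¹ * M ∧
      IsUnit (M - (GamOp M Ω).toBlocks₁₁) ∧
      GamInvOp M (GamOp M Ω) = Ω :=
  gamma_inv_gamma_general hMinv hinv
end
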